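/- arXiv:1208.1225 — 3 statements merged into one kernel-verified Lean document; each statement's English description precedes it below -/
import Mathlib

section
/- Let the r×r stochastic transition matrix {p(j|k)} be strictly positive and let m be a positive integer. Then ρ(A_m) = 1 if and only if ⟨m·α_{jk}⟩ = 0 for all j,k ∈ {1,…,r}. Consequently, there exists a positive integer m with ρ(A_m) = 1 if and only if all the numbers α_{jk} are rational. -/
/-!
STATEMENT 5: For a strictly positive r×r stochastic transition matrix and a
positive integer m: ρ(A_m) = 1 iff ⟨m·α_{jk}⟩ = 0 for all j,k; consequently
∃ positive m with ρ(A_m) = 1 iff all α_{jk} are rational.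
The alphabet is `Fin (r+2)`; state `1` of the paper is `0 : Fin (r+2)`.
-/

/-- The matrix A_m with (j,k) entry p(k|j)·exp(−2πi·m·log₂ p(k|j))
(strictly positive transition matrix). -/
noncomputable def AmatPos {r : ℕ} (p : Fin r → Fin r → ℝ) (m : ℤ) :
    Matrix (Fin r) (Fin r) ℂ :=
  Matrix.of fun j k =>
    (p k j : ℂ) *
      Complex.exp (-(2 * (Real.pi : ℂ) * Complex.I * (m : ℂ) *
        ((Real.logb 2 (p k j) : ℝ) : ℂ)))

/-- Spectral radius: supremum of the moduli of the eigenvalues. -/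
noncomputable def specRad {r : ℕ} (A : Matrix (Fin r) (Fin r) ℂ) : ℝ :=
  sSup {x : ℝ | ∃ lam : ℂ,
    (∃ v : Fin r → ℂ, v ≠ 0 ∧ A.mulVec v = lam • v) ∧ x = ‖lam‖}

/-- α_{jk} = log[ p(j|1)p(j|j) / (p(k|1)p(j|k)) ]. -/
noncomputable def alphaJK {r : ℕ} (p : Fin (r + 2) → Fin (r + 2) → ℝ)
    (j k : Fin (r + 2)) : ℝ :=
  Real.logb 2 (p j 0 * p j j / (p k 0 * p j k))

/-!
Let `A` have entries `w j k * θ j k`, with `w` row-stochastic and positive and `|θ j k| = 1`. Its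
rows have absolute sum `1`, so `ρ(A) ≤ 1`, and `ρ(A) = 1` exactly when some eigenvalue `μ` lies on
the unit circle. Let `A v = μ v` for such a `μ`. At an index `j` where `|v j|` is maximal, `μ v j`
is a convex combination with positive weights of the points `θ j k * v k`, none of larger modulus,
so by strict convexity of the disc all of them equal `μ v j`. Hence `|v|` is constant, the argument
applies at every `j`, and `θ` is gauge equivalent to a constant: `θ j k * u k = c * u j`.
Eliminating `c` and `u` leaves the condition `θ o j * θ j j = θ o k * θ k j` for a fixed base point
`o`, which for `θ j k = exp (-2πi m ℓ j k)` says that `m * (ℓ o j + ℓ j j - ℓ o k - ℓ k j)` is an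
integer; with `ℓ j k = log p(k|j)` and `o` the first state this is `m * α_{jk}`. A common
denominator of the `α_{jk}` serves as `m` for the rationality criterion.
-/

open Finset Matrix Module
open scoped FourierTransform NNReal

section StrictConvexity

variable {ι E : Type*} [NormedAddCommGroup E] [NormedSpace ℝ E] [StrictConvexSpace ℝ E]

lemma eq_sum_smul_of_forall_norm_le {t : Finset ι} {w : ι → ℝ} {z : ι → E}
    (hw : ∀ i ∈ t, 0 < w i) (hsum : ∑ i ∈ t, w i = 1)
    (hz : ∀ i ∈ t, ‖z i‖ ≤ ‖∑ k ∈ t, w k • z k‖) {i : ι} (hi : i ∈ t) :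
    z i = ∑ k ∈ t, w k • z k := by
  have hconst : ∀ k ∈ t, z k = z i := by
    by_contra! ⟨k, hk, hne⟩
    exact (norm_sum_lt_of_strictConvexSpace (fun l hl ↦ (hw l hl).le) hsum hk hi hne
      (hw k hk).ne' (hw i hi).ne' hz).false
  rw [sum_congr rfl fun k hk ↦ by rw [hconst k hk], ← sum_smul, hsum, one_smul]

end StrictConvexity

section Gauge

lemma exists_forall_mul_eq_mul_iff {ι G : Type*} [CommGroup G] (θ : ι → ι → G) (o : ι) :
    (∃ (c : G) (u : ι → G), ∀ j k, θ j k * u k = c * u j) ↔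
      ∀ j k, θ o j * θ j j = θ o k * θ k j := by
  constructor
  · rintro ⟨c, u, h⟩ j k
    have hdiag : θ j j = c := mul_right_cancel (h j j)
    refine mul_right_cancel (b := u j) ?_
    calc θ o j * θ j j * u j = c * (c * u o) := by rw [hdiag, mul_right_comm, h, mul_comm]
      _ = θ o k * θ k j * u j := by rw [mul_assoc, h k j, ← h o k, mul_left_comm]
  · intro h
    have hdiag : ∀ j, θ j j = θ o o := fun j ↦
      mul_left_cancel ((h j o).trans (mul_comm _ _))
    refine ⟨θ o o, fun j ↦ (θ o j)⁻¹, fun j k ↦ ?_⟩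
    rw [mul_inv_eq_iff_eq_mul, mul_right_comm, eq_mul_inv_iff_mul_eq, mul_comm, ← h k j, hdiag,
      mul_comm]

end Gauge

section Spectrum

variable {n : Type*} [Fintype n] [DecidableEq n]

lemma mem_spectrum_iff_exists_mulVec_eq_smul {K : Type*} [Field K] {A : Matrix n n K} {μ : K} :
    μ ∈ spectrum K A ↔ ∃ v, v ≠ 0 ∧ A *ᵥ v = μ • v := by
  rw [← spectrum_toLin', ← End.hasEigenvalue_iff_mem_spectrum, End.HasEigenvalue,
    End.HasUnifEigenvalue, Submodule.ne_bot_iff]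
  simp only [End.mem_eigenspace_iff, toLin'_apply, and_comm, ne_eq]

lemma spectralRadius_eq_iff_exists_nnnorm_eq [Nonempty n] {A : Matrix n n ℂ} {r : ℝ≥0}
    (hA : ∀ j, ∑ k, ‖A j k‖₊ ≤ r) :
    spectralRadius ℂ A = r ↔ ∃ μ ∈ spectrum ℂ A, ‖μ‖₊ = r := by
  let := Matrix.linftyOpNormedRing (n := n) (α := ℂ)
  let := Matrix.linftyOpNormedAlgebra (n := n) (R := ℂ) (α := ℂ)
  constructor
  · intro h
    obtain ⟨μ, hμ, hnorm⟩ := spectrum.exists_nnnorm_eq_spectralRadius A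
    exact ⟨μ, hμ, ENNReal.coe_injective (hnorm.trans h)⟩
  · rintro ⟨μ, hμ, rfl⟩
    refine le_antisymm ?_ (le_iSup₂_of_le μ hμ le_rfl)
    refine (spectrum.spectralRadius_le_nnnorm A).trans (ENNReal.coe_le_coe.2 ?_)
    rw [linfty_opNNNorm_def]
    exact Finset.sup_le fun j _ ↦ hA j

lemma specRad_eq_toReal_spectralRadius {r : ℕ} (A : Matrix (Fin r) (Fin r) ℂ) :
    specRad A = (spectralRadius ℂ A).toReal := by
  have hset : {x : ℝ | ∃ μ : ℂ, (∃ v, v ≠ 0 ∧ A *ᵥ v = μ • v) ∧ x = ‖μ‖} =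
      ENNReal.toReal '' ((‖·‖ₑ) '' spectrum ℂ A) := by
    ext x
    simp [mem_spectrum_iff_exists_mulVec_eq_smul, eq_comm]
  rw [specRad, hset, ← ENNReal.toReal_sSup _ (by simp), sSup_image]
  rfl

end Spectrum

section Twist

variable {n : Type*} {w : Matrix n n ℝ} {θ : n → n → Circle}

/-- The complex matrix obtained from the real weights `w` by giving the `(j, k)` entry the phase
`θ j k`. Each `A_m` has this form, with `w` and hence the moduli independent of `m`. -/
noncomputable def twist (w : Matrix n n ℝ) (θ : n → n → Circle) : Matrix n n ℂ :=
  of fun j k ↦ w j k • (θ j k : ℂ)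

variable [Fintype n]

lemma twist_mulVec (v : n → ℂ) (j : n) :
    (twist w θ *ᵥ v) j = ∑ k, w j k • (θ j k • v k) := by
  simp [twist, mulVec, dotProduct, Circle.smul_def, mul_assoc]

variable [DecidableEq n]

lemma sum_nnnorm_twist (hw : w ∈ rowStochastic ℝ n) (j : n) :
    ∑ k, ‖twist w θ j k‖₊ = 1 := by
  refine NNReal.coe_injective ?_
  simp only [twist, of_apply, NNReal.coe_sum, coe_nnnorm, norm_smul, Circle.norm_coe, mul_one,
    Real.norm_of_nonneg (nonneg_of_mem_rowStochastic hw), sum_row_of_mem_rowStochastic hw,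
    NNReal.coe_one]

lemma smul_eq_smul_of_twist_mulVec_eq_smul (hw : w ∈ rowStochastic ℝ n) (hpos : ∀ j k, 0 < w j k)
    {c : Circle} {v : n → ℂ} (hv : twist w θ *ᵥ v = c • v) {j : n} (hj : ∀ k, ‖v k‖ ≤ ‖v j‖)
    (k : n) : θ j k • v k = c • v j := by
  have hcomb : ∑ k, w j k • (θ j k • v k) = c • v j :=
    (twist_mulVec v j).symm.trans (congrFun hv j)
  rw [← hcomb]
  refine eq_sum_smul_of_forall_norm_le (z := fun k ↦ θ j k • v k) (fun l _ ↦ hpos j l)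
    (sum_row_of_mem_rowStochastic hw j) (fun l _ ↦ ?_) (mem_univ k)
  simpa only [hcomb, Circle.norm_smul] using hj l

lemma norm_eq_norm_of_twist_mulVec_eq_smul (hw : w ∈ rowStochastic ℝ n)
    (hpos : ∀ j k, 0 < w j k) {c : Circle} {v : n → ℂ} (hv : twist w θ *ᵥ v = c • v) (j k : n) :
    ‖v j‖ = ‖v k‖ := by
  have : Nonempty n := ⟨j⟩
  obtain ⟨i, hi⟩ := Finite.exists_max (‖v ·‖)
  have hmax : ∀ l, ‖v l‖ = ‖v i‖ := fun l ↦ by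
    simpa only [Circle.norm_smul] using
      congrArg norm (smul_eq_smul_of_twist_mulVec_eq_smul hw hpos hv hi l)
  rw [hmax j, hmax k]

lemma exists_circle_coe_eq {z : ℂ} (hz : ‖z‖ = 1) : ∃ c : Circle, (c : ℂ) = z :=
  ⟨⟨z, mem_sphere_zero_iff_norm.2 hz⟩, rfl⟩

lemma exists_forall_mul_eq_mul_of_twist_mulVec_eq_smul (hw : w ∈ rowStochastic ℝ n)
    (hpos : ∀ j k, 0 < w j k) {c : Circle} {v : n → ℂ} (hv0 : v ≠ 0)
    (hv : twist w θ *ᵥ v = c • v) :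
    ∃ u : n → Circle, ∀ j k, θ j k * u k = c * u j := by
  obtain ⟨i, hi⟩ := Function.ne_iff.1 hv0
  have hnorm : ∀ j k, ‖v j‖ = ‖v k‖ := norm_eq_norm_of_twist_mulVec_eq_smul hw hpos hv
  have hphase : ∀ j k, (θ j k : ℂ) * v k = c * v j := fun j ↦
    smul_eq_smul_of_twist_mulVec_eq_smul hw hpos hv fun k ↦ (hnorm k j).le
  have hunit : ∀ j, ‖v j / v i‖ = 1 := fun j ↦ by
    rw [norm_div, hnorm j i, div_self (norm_ne_zero_iff.2 hi)]
  choose u hu using fun j ↦ exists_circle_coe_eq (hunit j)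
  refine ⟨u, fun j k ↦ Circle.ext ?_⟩
  rw [Circle.coe_mul, Circle.coe_mul, hu, hu, ← mul_div_assoc, hphase, mul_div_assoc]

lemma exists_mem_spectrum_twist_nnnorm_eq_one_iff [Nonempty n] (hw : w ∈ rowStochastic ℝ n)
    (hpos : ∀ j k, 0 < w j k) :
    (∃ μ ∈ spectrum ℂ (twist w θ), ‖μ‖₊ = 1) ↔
      ∃ (c : Circle) (u : n → Circle), ∀ j k, θ j k * u k = c * u j := by
  simp only [mem_spectrum_iff_exists_mulVec_eq_smul]
  constructor
  · rintro ⟨μ, ⟨v, hv0, hv⟩, hμ⟩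
    obtain ⟨c, rfl⟩ := exists_circle_coe_eq (congrArg NNReal.toReal hμ)
    exact ⟨c, exists_forall_mul_eq_mul_of_twist_mulVec_eq_smul hw hpos hv0 hv⟩
  · rintro ⟨c, u, h⟩
    refine ⟨c, ⟨fun j ↦ u j, fun h0 ↦ ?_, ?_⟩, NNReal.coe_injective c.norm_coe⟩
    · exact (u (Classical.arbitrary n)).coe_ne_zero (congrFun h0 _)
    · ext j
      have hphase : ∀ k, θ j k • (u k : ℂ) = c • (u j : ℂ) := fun k ↦
        congrArg Subtype.val (h j k)
      simp only [twist_mulVec, hphase, ← sum_smul, sum_row_of_mem_rowStochastic hw, one_smul,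
        Pi.smul_apply]
      rfl

theorem spectralRadius_twist_eq_one_iff (hw : w ∈ rowStochastic ℝ n) (hpos : ∀ j k, 0 < w j k)
    (o : n) : spectralRadius ℂ (twist w θ) = 1 ↔ ∀ j k, θ o j * θ j j = θ o k * θ k j := by
  have : Nonempty n := ⟨o⟩
  rw [← exists_forall_mul_eq_mul_iff, ← exists_mem_spectrum_twist_nnnorm_eq_one_iff hw hpos,
    ← ENNReal.coe_one, spectralRadius_eq_iff_exists_nnnorm_eq fun j ↦ (sum_nnnorm_twist hw j).le]

end Twist

section LogPhases

/-- The additive obstruction to `ℓ` being gauge equivalent to a constant, based at `o`. For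
`ℓ j k = log p(k|j)` and `o` the first state it is the paper's `α_{jk}`. -/
def gaugeDefect {n : Type*} (ℓ : n → n → ℝ) (o j k : n) : ℝ :=
  ℓ o j + ℓ j j - (ℓ o k + ℓ k j)

lemma fourierChar_eq_one_iff (x : ℝ) : 𝐞 x = 1 ↔ Int.fract x = 0 := by
  simp only [Real.fourierChar_apply', Circle.exp_eq_one, mul_comm (2 * Real.pi),
    mul_left_inj' Real.two_pi_pos.ne', Int.fract_eq_zero_iff, Set.mem_range, eq_comm (a := x)]

lemma fourierChar_mul_eq_mul_iff_fract_gaugeDefect {n : Type*} (ℓ : n → n → ℝ) (t : ℝ)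
    (o j k : n) :
    𝐞 (-(t * ℓ o j)) * 𝐞 (-(t * ℓ j j)) = 𝐞 (-(t * ℓ o k)) * 𝐞 (-(t * ℓ k j)) ↔
      Int.fract (t * gaugeDefect ℓ o j k) = 0 := by
  have hdefect : -(t * ℓ o k) + -(t * ℓ k j) - (-(t * ℓ o j) + -(t * ℓ j j)) =
      t * gaugeDefect ℓ o j k := by
    rw [gaugeDefect]; ring
  rw [eq_comm, ← AddChar.map_add_eq_mul, ← AddChar.map_add_eq_mul, ← div_eq_one,
    ← AddChar.map_sub_eq_div, fourierChar_eq_one_iff, hdefect]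

lemma exists_pos_forall_fract_mul_eq_zero_iff {ι : Type*} [Finite ι] (x : ι → ℝ) :
    (∃ m : ℕ, 0 < m ∧ ∀ i, Int.fract (m * x i) = 0) ↔ ∀ i, ∃ q : ℚ, x i = q := by
  simp only [Int.fract_eq_zero_iff, Set.mem_range]
  constructor
  · rintro ⟨m, hm, h⟩ i
    obtain ⟨a, ha⟩ := h i
    refine ⟨a / m, ?_⟩
    rw [Rat.cast_div, Rat.cast_intCast, Rat.cast_natCast, ha,
      mul_div_cancel_left₀ _ (Nat.cast_ne_zero.2 hm.ne')]
  · intro h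
    choose q hq using h
    have := Fintype.ofFinite ι
    refine ⟨∏ i, (q i).den, prod_pos fun i _ ↦ (q i).den_pos, fun i ↦ ?_⟩
    obtain ⟨d, hd⟩ := dvd_prod_of_mem (fun i ↦ (q i).den) (mem_univ i)
    refine ⟨d * (q i).num, ?_⟩
    have hnum : ((q i).num : ℝ) = (q i).den * q i := mod_cast (Rat.den_mul_eq_num (q i)).symm
    rw [hd, hq]
    push_cast
    rw [hnum]
    ring

theorem spectral_radius_one_iff_fract_zero_general {n : Type*} [Fintype n] [DecidableEq n]
    {w : Matrix n n ℝ} (hw : w ∈ rowStochastic ℝ n) (hpos : ∀ j k, 0 < w j k)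
    (ℓ : n → n → ℝ) (o : n) (m : ℕ) :
    (spectralRadius ℂ (twist w fun j k ↦ 𝐞 (-(m * ℓ j k))) = 1 ↔
      ∀ j k, Int.fract (m * gaugeDefect ℓ o j k) = 0) ∧
    ((∃ m' : ℕ, 0 < m' ∧ spectralRadius ℂ (twist w fun j k ↦ 𝐞 (-(m' * ℓ j k))) = 1) ↔
      ∀ j k, ∃ q : ℚ, gaugeDefect ℓ o j k = q) := by
  have hiff (t : ℕ) : spectralRadius ℂ (twist w fun j k ↦ 𝐞 (-(t * ℓ j k))) = 1 ↔
      ∀ j k, Int.fract (t * gaugeDefect ℓ o j k) = 0 := by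
    simp only [spectralRadius_twist_eq_one_iff hw hpos o,
      fourierChar_mul_eq_mul_iff_fract_gaugeDefect]
  refine ⟨hiff m, ?_⟩
  simpa only [hiff, Prod.forall] using
    exists_pos_forall_fract_mul_eq_zero_iff fun i : n × n ↦ gaugeDefect ℓ o i.1 i.2

end LogPhases

section TransitionMatrix

lemma AmatPos_eq_twist {r : ℕ} (p : Fin r → Fin r → ℝ) (m : ℤ) :
    AmatPos p m = twist (of p)ᵀ fun j k ↦ 𝐞 (-(m * Real.logb 2 (p k j))) := by
  ext j k
  simp only [AmatPos, twist, transpose_apply, of_apply, Real.fourierChar_apply, Complex.real_smul]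
  congr 2
  push_cast
  ring

lemma specRad_AmatPos_eq_one_iff {r : ℕ} (p : Fin r → Fin r → ℝ) (m : ℤ) :
    specRad (AmatPos p m) = 1 ↔
      spectralRadius ℂ (twist (of p)ᵀ fun j k ↦ 𝐞 (-(m * Real.logb 2 (p k j)))) = 1 := by
  rw [AmatPos_eq_twist, specRad_eq_toReal_spectralRadius, ENNReal.toReal_eq_one_iff]

lemma alphaJK_eq_gaugeDefect {r : ℕ} {p : Fin (r + 2) → Fin (r + 2) → ℝ}
    (hp : ∀ j k, p j k ≠ 0) (j k : Fin (r + 2)) :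
    alphaJK p j k = gaugeDefect (fun j k ↦ Real.logb 2 (p k j)) 0 j k := by
  rw [alphaJK, gaugeDefect, Real.logb_div (mul_ne_zero (hp _ _) (hp _ _))
    (mul_ne_zero (hp _ _) (hp _ _)), Real.logb_mul (hp _ _) (hp _ _),
    Real.logb_mul (hp _ _) (hp _ _)]

end TransitionMatrix

theorem spectral_radius_one_iff_fract_zero (r : ℕ)
    (p : Fin (r + 2) → Fin (r + 2) → ℝ)
    (hppos : ∀ j k, 0 < p j k) (hpsum : ∀ k, ∑ j, p j k = 1)
    (m : ℕ) (hm : 0 < m) :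
    (specRad (AmatPos p (m : ℤ)) = 1 ↔
      ∀ j k, Int.fract ((m : ℝ) * alphaJK p j k) = 0) ∧
    ((∃ m' : ℕ, 0 < m' ∧ specRad (AmatPos p (m' : ℤ)) = 1) ↔
      ∀ j k, ∃ q : ℚ, alphaJK p j k = (q : ℝ)) := by
  have hw : (of p)ᵀ ∈ rowStochastic ℝ _ :=
    mem_rowStochastic_iff_sum.2 ⟨fun j k ↦ (hppos k j).le, hpsum⟩
  simpa only [specRad_AmatPos_eq_one_iff, alphaJK_eq_gaugeDefect fun j k ↦ (hppos j k).ne',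
    Int.cast_natCast] using
    spectral_radius_one_iff_fract_zero_general hw (fun j k ↦ hppos k j) _ 0 m
end

section
/- Let the r×r stochastic transition matrix {p(j|k)} be strictly positive and let M be a positive integer such that M·α_{jk} ∈ ℤ for all j,k. Then for every nonzero integer ℓ, the complex number λ = exp(−2πi·ℓM·log p(1|1)) is an eigenvalue of modulus 1 of the matrix A_{ℓM}, with right eigenvector x whose j-th component is x_j = exp(2πi·ℓM·log[ p(j|1)/p(j|j) ]); that is, A_{ℓM}·x = λ·x. -/
/-!
For fixed real `t`, `x ↦ exp (2πi t log₂ x)` is a homomorphism from the positive reals to the unit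
circle. With `o` the reference state, integrality of `t α_{jk}` says exactly that the phases `a j k`
of the transition probabilities satisfy `a j o * a j j = a k o * a j k`. Taking `k = o` gives
`a j j = a o o`, and then `(a k j)⁻¹ = (a o o)⁻¹ * x_j / x_k` with `x_j = a j o / a j j`. So `A` is
`λ = (a o o)⁻¹` times the stochastic matrix conjugated by the diagonal matrix of `x`, and `x` is the
image of the constant eigenvector.
-/

section DiagonalSimilarity

variable {ι : Type*}

open scoped Matrix in
theorem hadamard_mulVec_eq_smul_of_row_sum_eq_one {R : Type*} [CommSemiring R] [Fintype ι]
    {P Φ : Matrix ι ι R} {x : ι → R} {c : R} (hP : ∀ j, ∑ k, P j k = 1)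
    (hΦ : ∀ j k, Φ j k * x k = c * x j) : (P ⊙ Φ) *ᵥ x = c • x := by
  funext j
  calc ∑ k, P j k * Φ j k * x k
      = ∑ k, P j k * (c * x j) := Finset.sum_congr rfl fun k _ => by rw [mul_assoc, hΦ]
    _ = c * x j := by rw [← Finset.sum_mul, hP, one_mul]

variable {G : Type*} [CommGroup G] {a : ι → ι → G} {o : ι}

theorem diag_eq_of_mul_diag_eq (h : ∀ j k, a j o * a j j = a k o * a j k) (j : ι) :
    a j j = a o o :=
  mul_left_cancel ((h j o).trans (mul_comm _ _))

theorem inv_mul_div_diag_eq_of_mul_diag_eq (h : ∀ j k, a j o * a j j = a k o * a j k) (j k : ι) :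
    (a k j)⁻¹ * (a k o / a k k) = (a o o)⁻¹ * (a j o / a j j) := by
  have hkj : a k o / a k j = a j o / a o o :=
    div_eq_div_iff_mul_eq_mul.mpr (diag_eq_of_mul_diag_eq h k ▸ h k j)
  rw [← mul_div_assoc, ← mul_div_assoc, inv_mul_eq_div, inv_mul_eq_div, hkj,
    diag_eq_of_mul_diag_eq h j, diag_eq_of_mul_diag_eq h k]

end DiagonalSimilarity

/-- The phase `exp (2πi t log₂ x)` as a point of the unit circle: the phase of an entry of `A_t` is
the inverse of `logPhase t`. Since `Real.logb 2 x` is `log₂ |x|`, it depends only on `|x|`. -/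
noncomputable def logPhase (t x : ℝ) : Circle :=
  Real.fourierChar (t * Real.logb 2 x)

theorem coe_logPhase (t x : ℝ) :
    (logPhase t x : ℂ) =
      Complex.exp (2 * (Real.pi : ℂ) * Complex.I * (t : ℂ) * ((Real.logb 2 x : ℝ) : ℂ)) := by
  rw [logPhase, Real.fourierChar_apply]
  push_cast
  ring_nf

theorem coe_inv_logPhase (t x : ℝ) :
    (((logPhase t x)⁻¹ : Circle) : ℂ) =
      Complex.exp (-(2 * (Real.pi : ℂ) * Complex.I * (t : ℂ) * ((Real.logb 2 x : ℝ) : ℂ))) := by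
  rw [Circle.coe_inv, coe_logPhase, Complex.exp_neg]

theorem logPhase_mul (t : ℝ) {x y : ℝ} (hx : x ≠ 0) (hy : y ≠ 0) :
    logPhase t (x * y) = logPhase t x * logPhase t y := by
  simp only [logPhase, Real.logb_mul hx hy, mul_add, AddChar.map_add_eq_mul]

theorem logPhase_div (t : ℝ) {x y : ℝ} (hx : x ≠ 0) (hy : y ≠ 0) :
    logPhase t (x / y) = logPhase t x / logPhase t y := by
  simp only [logPhase, Real.logb_div hx hy, mul_sub, AddChar.map_sub_eq_div]

theorem logPhase_eq_one_iff {t x : ℝ} :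
    logPhase t x = 1 ↔ ∃ z : ℤ, t * Real.logb 2 x = z := by
  rw [logPhase, Real.fourierChar_apply', Circle.exp_eq_one]
  refine exists_congr fun z => ?_
  rw [mul_comm (z : ℝ), mul_right_inj' Real.two_pi_pos.ne']

theorem inv_logPhase_mul_logPhase_div_diag {ι : Type*} {p : ι → ι → ℝ} {o : ι} {t : ℝ}
    (hp : ∀ j k, p j k ≠ 0)
    (ht : ∀ j k, ∃ z : ℤ, t * Real.logb 2 (p j o * p j j / (p k o * p j k)) = z) (j k : ι) :
    (logPhase t (p k j))⁻¹ * logPhase t (p k o / p k k) =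
      (logPhase t (p o o))⁻¹ * logPhase t (p j o / p j j) := by
  have hphase : ∀ j k, logPhase t (p j o) * logPhase t (p j j) =
      logPhase t (p k o) * logPhase t (p j k) := fun j k => by
    rw [← div_eq_one, ← logPhase_mul t (hp j o) (hp j j), ← logPhase_mul t (hp k o) (hp j k),
      ← logPhase_div t (mul_ne_zero (hp j o) (hp j j)) (mul_ne_zero (hp k o) (hp j k))]
    exact logPhase_eq_one_iff.mpr (ht j k)
  rw [logPhase_div t (hp k o) (hp k k), logPhase_div t (hp j o) (hp j j)]
  exact inv_mul_div_diag_eq_of_mul_diag_eq (a := fun j k => logPhase t (p j k)) hphase j k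

theorem dominant_eigenvalue_and_right_eigenvector_general {ι : Type*} [Fintype ι] (o : ι)
    (p : ι → ι → ℝ) (hppos : ∀ j k, 0 < p j k) (hpsum : ∀ k, ∑ j, p j k = 1) (t : ℝ)
    (ht : ∀ j k, ∃ z : ℤ, t * Real.logb 2 (p j o * p j j / (p k o * p j k)) = (z : ℝ)) :
    ‖Complex.exp (-(2 * (Real.pi : ℂ) * Complex.I * (t : ℂ) *
        ((Real.logb 2 (p o o) : ℝ) : ℂ)))‖ = 1 ∧
    (Matrix.of fun j k => (p k j : ℂ) *
        Complex.exp (-(2 * (Real.pi : ℂ) * Complex.I * (t : ℂ) *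
          ((Real.logb 2 (p k j) : ℝ) : ℂ)))).mulVec
        (fun j => Complex.exp (2 * (Real.pi : ℂ) * Complex.I * (t : ℂ) *
          ((Real.logb 2 (p j o / p j j) : ℝ) : ℂ))) =
      Complex.exp (-(2 * (Real.pi : ℂ) * Complex.I * (t : ℂ) *
          ((Real.logb 2 (p o o) : ℝ) : ℂ))) •
        (fun j => Complex.exp (2 * (Real.pi : ℂ) * Complex.I * (t : ℂ) *
          ((Real.logb 2 (p j o / p j j) : ℝ) : ℂ))) := by
  have hp : ∀ j k, p j k ≠ 0 := fun j k => (hppos j k).ne'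
  have hrow : ∀ j, ∑ k, (p k j : ℂ) = 1 := fun j => mod_cast hpsum j
  simp only [← coe_logPhase, ← coe_inv_logPhase]
  refine ⟨Circle.norm_coe _, hadamard_mulVec_eq_smul_of_row_sum_eq_one
    (P := fun j k => (p k j : ℂ)) (Φ := fun j k => (((logPhase t (p k j))⁻¹ : Circle) : ℂ))
    hrow fun j k => ?_⟩
  simp only [← Circle.coe_mul, inv_logPhase_mul_logPhase_div_diag hp ht j k]

theorem dominant_eigenvalue_and_right_eigenvector (r : ℕ)
    (p : Fin (r + 2) → Fin (r + 2) → ℝ)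
    (hppos : ∀ j k, 0 < p j k) (hpsum : ∀ k, ∑ j, p j k = 1)
    (M : ℕ) (hM : 0 < M)
    (hMint : ∀ j k, ∃ z : ℤ, (M : ℝ) * alphaJK p j k = (z : ℝ))
    (l : ℤ) (hl : l ≠ 0) :
    ‖Complex.exp (-(2 * (Real.pi : ℂ) * Complex.I * ((l * M : ℤ) : ℂ) *
        ((Real.logb 2 (p 0 0) : ℝ) : ℂ)))‖ = 1 ∧
    (AmatPos p (l * M)).mulVec
        (fun j => Complex.exp (2 * (Real.pi : ℂ) * Complex.I * ((l * M : ℤ) : ℂ) *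
          ((Real.logb 2 (p j 0 / p j j) : ℝ) : ℂ))) =
      Complex.exp (-(2 * (Real.pi : ℂ) * Complex.I * ((l * M : ℤ) : ℂ) *
          ((Real.logb 2 (p 0 0) : ℝ) : ℂ))) •
        (fun j => Complex.exp (2 * (Real.pi : ℂ) * Complex.I * ((l * M : ℤ) : ℂ) *
          ((Real.logb 2 (p j 0 / p j j) : ℝ) : ℂ))) := by
  have hint : ∀ j k, ∃ z : ℤ, ((l * M : ℤ) : ℝ) * alphaJK p j k = (z : ℝ) := fun j k =>
    let ⟨z, hz⟩ := hMint j k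
    ⟨l * z, by push_cast; rw [mul_assoc, hz]⟩
  simpa only [AmatPos, Complex.ofReal_intCast] using
    dominant_eigenvalue_and_right_eigenvector_general 0 p hppos hpsum (l * M : ℤ) hint
end

section
/- Let 0 < α < 1 and consider the two-state Markov source with transition probabilities p(1|1) = 1−α, p(2|1) = α, p(1|2) = 0, p(2|2) = 1, and initial probabilities p₁ = 1, p₂ = 0 (so this chain is reducible). Then the average redundancy of the Shannon code converges: lim_{n→∞} R_n = Σ_{k=0}^∞ α·(1−α)^k·ϱ(−log α − k·log(1−α)). In particular, R_n always tends to a constant that depends on α. -/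
/-!
STATEMENT 15 (Example 2): For the reducible two-state Markov source with
p(1|1)=1−α, p(2|1)=α, p(1|2)=0, p(2|2)=1 and initial probabilities (1,0),
R_n → Σ_{k≥0} α(1−α)^k·ϱ(−log α − k·log(1−α)).
Block length is `n+1`; states 1, 2 of the paper are `0, 1 : Fin 2`; strings of
probability zero are excluded from the defining sum of R_n.
-/

/-- ϱ(u) = ⌈u⌉ − u -/
noncomputable def vrho (u : ℝ) : ℝ := (⌈u⌉ : ℝ) - u

noncomputable def markovProb {r n : ℕ} (pinit : Fin r → ℝ) (p : Fin r → Fin r → ℝ)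
    (x : Fin (n + 1) → Fin r) : ℝ :=
  pinit (x 0) * ∏ t : Fin n, p (x t.succ) (x t.castSucc)

open scoped Classical in
/-- Average redundancy of the Shannon code of block length `n+1`, summing only
over strings of positive probability. -/
noncomputable def shannonRedPos (r n : ℕ) (pinit : Fin r → ℝ)
    (p : Fin r → Fin r → ℝ) : ℝ :=
  ∑ x ∈ Finset.univ.filter
      (fun x : Fin (n + 1) → Fin r => 0 < markovProb pinit p x),
    markovProb pinit p x * vrho (-Real.logb 2 (markovProb pinit p x))

/-!
A string has positive probability only if it is `1ᵏ⁺¹ 2ᵐ`: the chain leaves state 1 at most once and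
never returns. For block length `n + 1` these strings have probabilities `α (1 - α)^k` for `k < n`
(absorbed after `k` further stays in state 1) and `(1 - α)^n` (never absorbed), so with
`f u = u * ϱ(-log u)`,
`R = ∑ k < n, f (α (1 - α)^k) + f ((1 - α)^n)`.
Since `|f u| ≤ |u|`, the sum is a partial sum of a series dominated by a geometric one, and the
last term tends to `0`.

The closed form is an induction on `n` by conditioning on the first letter `i`: this shortens the
string by one and replaces the initial weights by `j ↦ pinit i * p j i`, so the induction runs over
unnormalized initial weights.
-/

open Filter Topology

section ShannonRedundancy

lemma vrho_eq_fract_neg (u : ℝ) : vrho u = Int.fract (-u) := by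
  rw [vrho, Int.fract, Int.floor_neg]
  push_cast
  ring

lemma abs_vrho_le_one (u : ℝ) : |vrho u| ≤ 1 := by
  rw [vrho_eq_fract_neg, Int.abs_fract]
  exact (Int.fract_lt_one _).le

/-- The contribution `u * ϱ(-log u)` of a string of probability `u` to the average redundancy of the
Shannon code. It vanishes at `u = 0`, whatever the value of `log 0`, so strings of probability zero
may be included in the sum. -/
noncomputable def redundancyTerm (u : ℝ) : ℝ := u * vrho (-Real.logb 2 u)

lemma redundancyTerm_zero : redundancyTerm 0 = 0 := zero_mul _

lemma abs_redundancyTerm_le (u : ℝ) : |redundancyTerm u| ≤ |u| := by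
  rw [redundancyTerm, abs_mul]
  exact mul_le_of_le_one_right (abs_nonneg u) (abs_vrho_le_one _)

lemma continuousAt_redundancyTerm_zero : ContinuousAt redundancyTerm 0 := by
  rw [ContinuousAt, redundancyTerm_zero]
  exact squeeze_zero_norm abs_redundancyTerm_le (continuous_abs.tendsto' 0 0 abs_zero)

lemma summable_redundancyTerm {ι : Type*} {u : ι → ℝ} (hu : Summable u) :
    Summable fun i => redundancyTerm (u i) :=
  .of_norm_bounded hu.abs fun i => abs_redundancyTerm_le (u i)

lemma redundancyTerm_mul_pow {c s : ℝ} (hc : c ≠ 0) (hs : s ≠ 0) (k : ℕ) :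
    redundancyTerm (c * s ^ k) =
      c * s ^ k * vrho (-Real.logb 2 c - (k : ℝ) * Real.logb 2 s) := by
  rw [redundancyTerm, Real.logb_mul hc (pow_ne_zero k hs), Real.logb_pow, neg_add']

end ShannonRedundancy

section MarkovSource

variable {r n : ℕ} {pinit : Fin r → ℝ} {p : Fin r → Fin r → ℝ}

lemma markovProb_nonneg (hpinit : 0 ≤ pinit) (hp : 0 ≤ p) (x : Fin (n + 1) → Fin r) :
    0 ≤ markovProb pinit p x :=
  mul_nonneg (hpinit _) (Finset.prod_nonneg fun _ _ => hp _ _)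

lemma shannonRedPos_eq_sum_redundancyTerm (hpinit : 0 ≤ pinit) (hp : 0 ≤ p) :
    shannonRedPos r n pinit p =
      ∑ x : Fin (n + 1) → Fin r, redundancyTerm (markovProb pinit p x) :=
  Finset.sum_filter_of_ne fun x _ hx =>
    (markovProb_nonneg hpinit hp x).lt_of_ne' (left_ne_zero_of_mul hx)

variable (pinit p)

lemma markovProb_cons (i : Fin r) (y : Fin (n + 1) → Fin r) :
    markovProb pinit p (Fin.cons i y : Fin (n + 2) → Fin r) =
      markovProb (fun j => pinit i * p j i) p y := by
  simp only [markovProb, Fin.prod_univ_succ, Fin.cons_zero, Fin.cons_succ, Fin.castSucc_zero,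
    ← Fin.succ_castSucc, mul_assoc]

lemma sum_markovProb_succ {M : Type*} [AddCommMonoid M] (f : ℝ → M) :
    ∑ x : Fin (n + 2) → Fin r, f (markovProb pinit p x) =
      ∑ i, ∑ y : Fin (n + 1) → Fin r, f (markovProb (fun j => pinit i * p j i) p y) := by
  simp only [← markovProb_cons]
  rw [← (Fin.consEquiv fun _ : Fin (n + 2) => Fin r).sum_comp, Fintype.sum_prod_type]
  rfl

lemma sum_markovProb_zero {M : Type*} [AddCommMonoid M] (f : ℝ → M) :
    ∑ x : Fin 1 → Fin r, f (markovProb pinit p x) = ∑ i, f (pinit i) := by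
  rw [← (Equiv.funUnique (Fin 1) (Fin r)).symm.sum_comp]
  simp [markovProb]

end MarkovSource

section AbsorbingChain

/-- The transition weights of a two-state chain whose state `1` is absorbing: from state `0` it
stays with weight `s` and is absorbed with weight `c`. The entry `j k` is the weight of moving to
`j` from `k`, the order of arguments that `markovProb` expects. -/
def absorbingKernel (s c : ℝ) : Fin 2 → Fin 2 → ℝ := ![![s, 0], ![c, 1]]

lemma absorbingKernel_nonneg {s c : ℝ} (hs : 0 ≤ s) (hc : 0 ≤ c) : 0 ≤ absorbingKernel s c := by
  intro j k
  fin_cases j <;> fin_cases k <;> simp [absorbingKernel, hs, hc]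

lemma sum_markovProb_absorbingKernel_succ {M : Type*} [AddCommMonoid M] (f : ℝ → M)
    (s c a b : ℝ) (n : ℕ) :
    ∑ x : Fin (n + 2) → Fin 2, f (markovProb ![a, b] (absorbingKernel s c) x) =
      ∑ y : Fin (n + 1) → Fin 2, f (markovProb ![a * s, a * c] (absorbingKernel s c) y) +
      ∑ y : Fin (n + 1) → Fin 2, f (markovProb ![0, b] (absorbingKernel s c) y) := by
  have from_transient : (fun j => ![a, b] 0 * absorbingKernel s c j 0) = ![a * s, a * c] := by
    ext j; fin_cases j <;> simp [absorbingKernel]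
  have from_absorbing : (fun j => ![a, b] 1 * absorbingKernel s c j 1) = ![0, b] := by
    ext j; fin_cases j <;> simp [absorbingKernel]
  rw [sum_markovProb_succ, Fin.sum_univ_two, from_transient, from_absorbing]

lemma sum_markovProb_absorbingKernel {M : Type*} [AddCommMonoid M] {f : ℝ → M} (hf : f 0 = 0)
    (s c a b : ℝ) (n : ℕ) :
    ∑ x : Fin (n + 1) → Fin 2, f (markovProb ![a, b] (absorbingKernel s c) x) =
      f b + ∑ k ∈ Finset.range n, f (a * c * s ^ k) + f (a * s ^ n) := by
  induction n generalizing a b with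
  | zero => simp [sum_markovProb_zero, add_comm]
  | succ n ih =>
    have stay (k : ℕ) : a * s * c * s ^ k = a * c * s ^ (k + 1) := by ring
    have stay_last : a * s * s ^ n = a * s ^ (n + 1) := by ring
    rw [sum_markovProb_absorbingKernel_succ, ih, ih, Finset.sum_range_succ']
    simp only [stay, stay_last, zero_mul, hf, Finset.sum_const_zero, pow_zero, mul_one, add_zero]
    abel

lemma tendsto_sum_markovProb_absorbingKernel {M : Type*} [AddCommMonoid M] [TopologicalSpace M]
    [ContinuousAdd M] {f : ℝ → M} (hf : f 0 = 0) (hfc : ContinuousAt f 0) {s : ℝ} (hs : |s| < 1)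
    (c a b : ℝ) (hsum : Summable fun k : ℕ => f (a * c * s ^ k)) :
    Tendsto
      (fun n : ℕ => ∑ x : Fin (n + 1) → Fin 2, f (markovProb ![a, b] (absorbingKernel s c) x))
      atTop (𝓝 (f b + ∑' k : ℕ, f (a * c * s ^ k))) := by
  simp only [sum_markovProb_absorbingKernel hf]
  have never_absorbed : Tendsto (fun n : ℕ => f (a * s ^ n)) atTop (𝓝 0) := by
    have hpow := (tendsto_pow_atTop_nhds_zero_of_abs_lt_one hs).const_mul a
    rw [mul_zero] at hpow
    simpa only [hf, Function.comp_def] using hfc.tendsto.comp hpow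
  simpa only [add_zero] using (hsum.hasSum.tendsto_sum_nat.const_add (f b)).add never_absorbed

lemma tendsto_shannonRedPos_absorbingKernel {s c a b : ℝ} (hs : 0 ≤ s) (hs1 : s < 1) (hc : 0 ≤ c)
    (ha : 0 ≤ a) (hb : 0 ≤ b) :
    Tendsto (fun n : ℕ => shannonRedPos 2 n ![a, b] (absorbingKernel s c)) atTop
      (𝓝 (redundancyTerm b + ∑' k : ℕ, redundancyTerm (a * c * s ^ k))) := by
  have hinit : 0 ≤ ![a, b] := by simp [Pi.le_def, Fin.forall_fin_two, ha, hb]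
  simp only [shannonRedPos_eq_sum_redundancyTerm hinit (absorbingKernel_nonneg hs hc)]
  exact tendsto_sum_markovProb_absorbingKernel redundancyTerm_zero continuousAt_redundancyTerm_zero
    ((abs_of_nonneg hs).trans_lt hs1) c a b
    (summable_redundancyTerm ((summable_geometric_of_lt_one hs hs1).mul_left (a * c)))

end AbsorbingChain

theorem reducible_two_state_redundancy_limit (α : ℝ) (hα0 : 0 < α) (hα1 : α < 1) :
    Filter.Tendsto
      (fun n : ℕ => shannonRedPos 2 n ![1, 0] (fun j k => ![![1 - α, 0], ![α, 1]] j k))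
      Filter.atTop
      (nhds (∑' k : ℕ, α * (1 - α) ^ k *
        vrho (-Real.logb 2 α - (k : ℝ) * Real.logb 2 (1 - α)))) := by
  have hβ : 0 < 1 - α := sub_pos.2 hα1
  have hlim := tendsto_shannonRedPos_absorbingKernel hβ.le (sub_lt_self 1 hα0) hα0.le
    zero_le_one le_rfl
  simp only [redundancyTerm_zero, zero_add, one_mul, redundancyTerm_mul_pow hα0.ne' hβ.ne'] at hlim
  exact hlim
end
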